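/- arXiv:1607.05850 — 3 statements merged into one kernel-verified Lean document; each statement's English description precedes it below -/
import Mathlib

section
/- Let Γ = ((V,E),(V₁,V₂)) be a game graph with GR(1) objective given by target sets L₁,…,L_{k₁} and U₁,…,U_{k₂}. Every player-2 dominion D of Γ (with respect to the GR(1) objective) contains a subset D' ⊆ D that is a player-2 dominion with D' ∩ U_ℓ = ∅ for some 1 ≤ ℓ ≤ k₂. -/
open Classical

universe u

/-- A game graph: a directed graph `E` on vertex set `V` together with the set
`P1` of player-1 vertices; player-2 vertices are the complement of `P1`. -/
structure GameGraph (V : Type u) where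
  E : V → V → Prop
  P1 : Set V

/-- The two players. -/
inductive Player : Type where
  | one : Player
  | two : Player

/-- The opponent of a player. -/
def Player.opp : Player → Player
  | .one => .two
  | .two => .one

/-- Select the first argument for player 1 and the second for player 2. -/
def Player.sel {α : Sort*} : Player → α → α → α
  | .one, a, _ => a
  | .two, _, b => b

variable {V : Type u}

/-- The vertices belonging to a player. -/
def GameGraph.verts (Γ : GameGraph V) : Player → Set V
  | .one => Γ.P1
  | .two => Γ.P1ᶜ

/-- Every vertex has at least one outgoing edge. -/
def GameGraph.NoDead (Γ : GameGraph V) : Prop := ∀ v, ∃ w, Γ.E v w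

/-- A (general, history-dependent) strategy: given the history of the play so far
(the vertices visited strictly before the current one) and the current vertex,
choose a next vertex. -/
abbrev Strat (V : Type u) : Type u := List V → V → V

/-- A strategy is memoryless if it depends only on the current vertex. -/
def Memoryless (σ : Strat V) : Prop := ∀ h h' v, σ h v = σ h' v

/-- A strategy is valid for player `p` if at every vertex of player `p` it
chooses a successor of that vertex. -/
def GameGraph.ValidFor (Γ : GameGraph V) (p : Player) (σ : Strat V) : Prop :=
  ∀ hist v, v ∈ Γ.verts p → Γ.E v (σ hist v)

/-- One step of the play: the player-1 strategy moves at `P1`-vertices, the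
player-2 strategy elsewhere. -/
noncomputable def GameGraph.step (Γ : GameGraph V) (σ π : Strat V)
    (hist : List V) (v : V) : V :=
  if v ∈ Γ.P1 then σ hist v else π hist v

/-- The play determined by a start vertex `v`, a player-1 strategy `σ` and a
player-2 strategy `π`, together with its history. -/
noncomputable def GameGraph.playAux (Γ : GameGraph V) (σ π : Strat V) (v : V) :
    ℕ → List V × V
  | 0 => ([], v)
  | n + 1 =>
      let q := Γ.playAux σ π v n
      (q.1 ++ [q.2], Γ.step σ π q.1 q.2)

/-- The play determined by a start vertex `v`, a player-1 strategy `σ` and a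
player-2 strategy `π`. -/
noncomputable def GameGraph.play (Γ : GameGraph V) (σ π : Strat V) (v : V)
    (n : ℕ) : V :=
  (Γ.playAux σ π v n).2

/-- The play from `v` where player `p` uses strategy `σ` and the opponent uses
strategy `τ`. -/
noncomputable def GameGraph.winPlay (Γ : GameGraph V) (p : Player)
    (σ τ : Strat V) (v : V) : ℕ → V :=
  Γ.play (p.sel σ τ) (p.sel τ σ) v

/-- Player `p` wins from `v` for objective `Ω`: player 1 wants the resulting
play to lie in `Ω`, player 2 wants it to lie outside `Ω`. -/
def GameGraph.Wins (Γ : GameGraph V) (p : Player) (Ω : Set (ℕ → V)) (v : V) :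
    Prop :=
  ∃ σ, Γ.ValidFor p σ ∧ ∀ τ, Γ.ValidFor p.opp τ →
    p.sel (Γ.winPlay p σ τ v ∈ Ω) (Γ.winPlay p σ τ v ∉ Ω)

/-- A player-`p` dominion for objective `Ω`: a nonempty set from each of whose
vertices player `p` has a winning strategy that moreover keeps the play inside
the set. -/
def GameGraph.Dominion (Γ : GameGraph V) (p : Player) (Ω : Set (ℕ → V))
    (D : Set V) : Prop :=
  D.Nonempty ∧ ∀ v ∈ D, ∃ σ, Γ.ValidFor p σ ∧ ∀ τ, Γ.ValidFor p.opp τ →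
    (p.sel (Γ.winPlay p σ τ v ∈ Ω) (Γ.winPlay p σ τ v ∉ Ω)) ∧
    ∀ n, Γ.winPlay p σ τ v n ∈ D

/-- The player-`p` attractor of `U`: the least set containing `U`, every
player-`p` vertex with some successor in it, and every opponent vertex all of
whose successors are in it. -/
inductive GameGraph.Attr (Γ : GameGraph V) (p : Player) (U : Set V) : V → Prop
  | base {v} : v ∈ U → GameGraph.Attr Γ p U v
  | own {v w} : v ∈ Γ.verts p → Γ.E v w → GameGraph.Attr Γ p U w →
      GameGraph.Attr Γ p U v
  | opp {v} : v ∈ Γ.verts p.opp → (∀ w, Γ.E v w → GameGraph.Attr Γ p U w) →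
      GameGraph.Attr Γ p U v

/-- The player-`p` attractor, as a set. -/
def GameGraph.attr (Γ : GameGraph V) (p : Player) (U : Set V) : Set V :=
  {v | Γ.Attr p U v}

/-- The iterative construction `R_j` of the player-`p` attractor. -/
def GameGraph.attrIter (Γ : GameGraph V) (p : Player) (U : Set V) : ℕ → Set V
  | 0 => U
  | n + 1 =>
      Γ.attrIter p U n
        ∪ {v | v ∈ Γ.verts p ∧ ∃ w, Γ.E v w ∧ w ∈ Γ.attrIter p U n}
        ∪ {v | v ∈ Γ.verts p.opp ∧ ∀ w, Γ.E v w → w ∈ Γ.attrIter p U n}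

/-- The `p`-rank of `v` with respect to `U`: the least `j` with `v ∈ R_j`, and
`∞` if there is no such `j`. -/
noncomputable def GameGraph.rank (Γ : GameGraph V) (p : Player) (U : Set V)
    (v : V) : ℕ∞ :=
  ⨅ n ∈ {n : ℕ | v ∈ Γ.attrIter p U n}, (n : ℕ∞)

/-- A set `U` is `p`-closed: every player-`p` vertex of `U` has all its
successors in `U`, and every opponent vertex of `U` has some successor in `U`. -/
def GameGraph.PClosed (Γ : GameGraph V) (p : Player) (U : Set V) : Prop :=
  ∀ v ∈ U, (v ∈ Γ.verts p → ∀ w, Γ.E v w → w ∈ U) ∧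
    (v ∈ Γ.verts p.opp → ∃ w, Γ.E v w ∧ w ∈ U)

/-- The induced game graph on a subset `U` of the vertices. -/
def GameGraph.sub (Γ : GameGraph V) (U : Set V) : GameGraph U where
  E a b := Γ.E (a : V) (b : V)
  P1 := {a : U | (a : V) ∈ Γ.P1}

/-- The game graph with the roles of the two players exchanged. -/
def GameGraph.swap (Γ : GameGraph V) : GameGraph V where
  E := Γ.E
  P1 := Γ.P1ᶜ

/-- The set of vertices occurring infinitely often in a play. -/
def InfOcc (ω : ℕ → V) : Set V := {v | ∀ n, ∃ m, n ≤ m ∧ ω m = v}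

/-- An objective is prefix-independent if membership of a play depends only on
the set of vertices visited infinitely often. -/
def PrefixIndep (Ω : Set (ℕ → V)) : Prop :=
  ∀ ω ω', InfOcc ω = InfOcc ω' → (ω ∈ Ω ↔ ω' ∈ Ω)

/-- The Büchi objective with target set `T`. -/
def BuchiObj (T : Set V) : Set (ℕ → V) := {ω | (InfOcc ω ∩ T).Nonempty}

/-- The generalized Büchi objective with target sets `T i`. -/
def GenBuchiObj {ι : Sort*} (T : ι → Set V) : Set (ℕ → V) :=
  {ω | ∀ i, (InfOcc ω ∩ T i).Nonempty}

/-- The disjunctive co-Büchi objective with target sets `T i`. -/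
def DisjCoBuchiObj {ι : Sort*} (T : ι → Set V) : Set (ℕ → V) :=
  {ω | ∃ i, InfOcc ω ∩ T i = ∅}

/-- The GR(1) objective with assumption sets `L t` and guarantee sets `U ℓ`. -/
def GR1Obj {ι₁ ι₂ : Sort*} (L : ι₁ → Set V) (U : ι₂ → Set V) : Set (ℕ → V) :=
  {ω | (∀ t, (InfOcc ω ∩ L t).Nonempty) → ∀ ℓ, (InfOcc ω ∩ U ℓ).Nonempty}

/-- An objective on the full vertex set, restricted to plays of the induced
game graph on `U`. -/
def subObj (U : Set V) (Ω : Set (ℕ → V)) : Set (ℕ → ↥U) :=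
  {ω | (fun n => (ω n : V)) ∈ Ω}

/-- The out-degree of a vertex. -/
noncomputable def GameGraph.outDeg (Γ : GameGraph V) (v : V) : ℕ :=
  {w | Γ.E v w}.ncard

/-- A hierarchical graph decomposition of a game graph `Γ`: for every vertex
`v`, `idx v` enumerates the incoming edges of `v` (i.e., their sources) by the
positions `0, …, indeg(v) − 1`, listing edges from player-2 vertices first. -/
structure HierDecomp (Γ : GameGraph V) where
  idx : V → V → ℕ
  idx_inj : ∀ v u u', Γ.E u v → Γ.E u' v → idx v u = idx v u' → u = u'
  idx_lt : ∀ v u, Γ.E u v → idx v u < {u' | Γ.E u' v}.ncard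
  p2_first : ∀ v u u', Γ.E u v → Γ.E u' v → u ∉ Γ.P1 → u' ∈ Γ.P1 →
      idx v u < idx v u'

/-- The `i`-th level `Γ_i = (G_i, (V₁,V₂))` of the hierarchical graph
decomposition: `G_i` keeps all outgoing edges of vertices of out-degree at most
`2^i`, and the first `2^i` incoming edges of every vertex. -/
def HierDecomp.graph {Γ : GameGraph V} (H : HierDecomp Γ) (i : ℕ) :
    GameGraph V where
  E u v := Γ.E u v ∧ (Γ.outDeg u ≤ 2 ^ i ∨ H.idx v u < 2 ^ i)
  P1 := Γ.P1

/-- The exception set `Z_i`: player-2 vertices with no outgoing edge in `G_i`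
together with player-1 vertices with more than `2^i` outgoing edges in `G`. -/
def HierDecomp.Z {Γ : GameGraph V} (H : HierDecomp Γ) (i : ℕ) : Set V :=
  {v | v ∉ Γ.P1 ∧ ¬ ∃ w, (H.graph i).E v w} ∪
    {v | v ∈ Γ.P1 ∧ 2 ^ i < Γ.outDeg v}

/-- Cyclic successor `ℓ ⊕ 1` on `Fin k`. -/
def finSucc {k : ℕ} (ℓ : Fin k) : Fin k :=
  ⟨(ℓ.val + 1) % k, Nat.mod_lt _ (Nat.lt_of_le_of_lt (Nat.zero_le _) ℓ.isLt)⟩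

/-- The bound `n̄ = min (h − 1) |V ∖ T|` of the progress measure. -/
noncomputable def nbar (h : ℕ) (T : Set V) : ℕ := min (h - 1) Tᶜ.ncard

/-- The value of the best successor of `v` for the player owning `v`. -/
noncomputable def GameGraph.best (Γ : GameGraph V) {k : ℕ} (T : Fin k → Set V)
    (ρ : Fin k → V → ℕ∞) (ℓ : Fin k) (v : V) : ℕ∞ :=
  let ℓ' := if v ∈ T ℓ then finSucc ℓ else ℓ
  if v ∈ Γ.P1 then ⨅ w ∈ {w | Γ.E v w}, ρ ℓ' w
  else ⨆ w ∈ {w | Γ.E v w}, ρ ℓ' w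

/-- The increment operation `incr` of the progress measure (for the pair
`(v, ℓ)`). -/
noncomputable def pmIncr (h : ℕ) {k : ℕ} (T : Fin k → Set V) (ℓ : Fin k)
    (v : V) (x : ℕ∞) : ℕ∞ :=
  if v ∈ T ℓ ∧ x ≠ ⊤ then 0
  else if x < (nbar h (T ℓ) : ℕ∞) then x + 1 else ⊤

/-- The update operator of the progress measure: update `ρ ℓ v` to
`max (ρ ℓ v) (incr (best v))`. -/
noncomputable def GameGraph.pmStep (Γ : GameGraph V) (h : ℕ) {k : ℕ}
    (T : Fin k → Set V) (ρ : Fin k → V → ℕ∞) : Fin k → V → ℕ∞ :=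
  fun ℓ v => max (ρ ℓ v) (pmIncr h T ℓ v (Γ.best T ρ ℓ v))

/-- `ρ` is the progress measure associated with `Γ`, `T` and `h`: the least
fixed point (starting from the all-zero functions, i.e., the least one) of the
update operator. -/
def GameGraph.IsProgressMeasure (Γ : GameGraph V) (h : ℕ) {k : ℕ}
    (T : Fin k → Set V) (ρ : Fin k → V → ℕ∞) : Prop :=
  Γ.pmStep h T ρ = ρ ∧ ∀ ρ', Γ.pmStep h T ρ' = ρ' → ∀ ℓ v, ρ ℓ v ≤ ρ' ℓ v

/-- Player `p` can force, from `v`, that the play stays in `D` forever and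
visits every target set `T i` infinitely often. -/
def GameGraph.ForcesStayBuchi (Γ : GameGraph V) (p : Player) (D : Set V)
    {ι : Sort*} (T : ι → Set V) (v : V) : Prop :=
  ∃ σ, Γ.ValidFor p σ ∧ ∀ τ, Γ.ValidFor p.opp τ →
    (∀ n, Γ.winPlay p σ τ v n ∈ D) ∧
    ∀ i n, ∃ m, n ≤ m ∧ Γ.winPlay p σ τ v m ∈ T i

/-!
Suppose player 2 plays a strategy winning on `D`, and call an infinite sequence an outcome if it
is consistent with that strategy. If from some finite prefix of an outcome player 2 could avoid some
`U ℓ` altogether, the vertices from which he can do so while staying in `D` and meeting the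
assumptions form the required dominion. Otherwise every finite prefix of an outcome extends to an
outcome visiting `U ℓ` later on, for each `ℓ`. The outcomes form a closed subset of `ℕ → V`, for `V`
discrete, and the set of those visiting `U ℓ` after time `n` is open and dense in it. By the Baire
category theorem some outcome visits every `U ℓ` infinitely often, so player 2 does not win.
-/

open Filter TopologicalSpace

/-- The list of the first `n` vertices of a play, in the order in which strategies receive them. -/
def history (ω : ℕ → V) (n : ℕ) : List V := (List.range n).map ω

theorem length_history (ω : ℕ → V) (n : ℕ) : (history ω n).length = n := by
  simp [history]

theorem history_succ (ω : ℕ → V) (n : ℕ) : history ω (n + 1) = history ω n ++ [ω n] := by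
  simp [history, List.range_succ]

theorem history_add (ω : ℕ → V) (n m : ℕ) :
    history ω (n + m) = history ω n ++ history (fun k ↦ ω (n + k)) m := by
  simp [history, List.range_add, Function.comp_def]

theorem history_congr {ω ω' : ℕ → V} {n : ℕ} (h : ∀ m < n, ω m = ω' m) :
    history ω n = history ω' n :=
  List.map_congr_left fun m hm ↦ h m (List.mem_range.1 hm)

/-- A set of plays is suffix-closed if it contains every suffix of each of its members. -/
def SuffixClosed (Φ : Set (ℕ → V)) : Prop := ∀ ω ∈ Φ, ∀ n, (fun m ↦ ω (n + m)) ∈ Φ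

theorem SuffixClosed.inter {Φ Ψ : Set (ℕ → V)} (hΦ : SuffixClosed Φ) (hΨ : SuffixClosed Ψ) :
    SuffixClosed (Φ ∩ Ψ) :=
  fun ω hω n ↦ ⟨hΦ ω hω.1 n, hΨ ω hω.2 n⟩

theorem suffixClosed_forall_mem (A : Set V) : SuffixClosed {ω | ∀ n, ω n ∈ A} :=
  fun _ hω n m ↦ hω (n + m)

theorem mem_infOcc_iff_frequently {ω : ℕ → V} {v : V} :
    v ∈ InfOcc ω ↔ ∃ᶠ n in atTop, ω n = v :=
  frequently_atTop.symm

theorem infOcc_suffix (ω : ℕ → V) (n : ℕ) : InfOcc (fun m ↦ ω (n + m)) = InfOcc ω := by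
  ext v
  rw [mem_infOcc_iff_frequently, mem_infOcc_iff_frequently]
  conv_rhs => rw [← map_add_atTop_eq_nat n, frequently_map]
  simp only [Nat.add_comm n]

theorem PrefixIndep.suffixClosed {Ω : Set (ℕ → V)} (hΩ : PrefixIndep Ω) : SuffixClosed Ω :=
  fun ω hω n ↦ (hΩ _ ω (infOcc_suffix ω n)).2 hω

theorem prefixIndep_genBuchiObj {ι : Sort*} (T : ι → Set V) : PrefixIndep (GenBuchiObj T) :=
  fun ω ω' h ↦ by simp only [GenBuchiObj, Set.mem_ofPred_eq, h]

theorem infOcc_inter_nonempty_of_frequently_mem {ω : ℕ → V} {T : Set V} (hT : T.Finite)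
    (h : ∃ᶠ n in atTop, ω n ∈ T) : (InfOcc ω ∩ T).Nonempty := by
  have hex : ∃ᶠ n in atTop, ∃ v ∈ T, ω n = v := by simpa using h
  obtain ⟨v, hvT, hv⟩ := hT.frequently_exists.1 hex
  exact ⟨v, mem_infOcc_iff_frequently.2 hv, hvT⟩

theorem dense_exists_mem_of_forall_exists_extension [TopologicalSpace V] [DiscreteTopology V]
    {C : Set (ℕ → V)} {T : Set V}
    (hext : ∀ ω ∈ C, ∀ n, ∃ ω' ∈ C, (∀ m < n, ω' m = ω m) ∧ ∃ m ≥ n, ω' m ∈ T) (n : ℕ) :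
    Dense {ω : C | ∃ m ≥ n, ω.1 m ∈ T} := by
  refine dense_iff_inter_open.2 fun W hW ⟨ω, hωW⟩ ↦ ?_
  obtain ⟨W', hW', rfl⟩ := isOpen_induced_iff.1 hW
  obtain ⟨_, ⟨x, k, rfl⟩, hωx, hsub⟩ :=
    (PiNat.isTopologicalBasis_cylinders fun _ : ℕ ↦ V).exists_subset_of_mem_open hωW hW'
  obtain ⟨ω', hω', hagree, m, hm, hmT⟩ := hext ω ω.2 (max k n)
  refine ⟨⟨ω', hω'⟩, hsub fun i hi ↦ ?_, m, (le_max_right k n).trans hm, hmT⟩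
  exact (hagree i (hi.trans_le (le_max_left k n))).trans (hωx i hi)

theorem exists_mem_forall_frequently_mem_of_isClosed [TopologicalSpace V] [DiscreteTopology V]
    {C : Set (ℕ → V)} (hC : IsClosed C) (hne : C.Nonempty) {ι : Sort*} [Countable ι]
    {T : ι → Set V}
    (hext : ∀ ω ∈ C, ∀ n i, ∃ ω' ∈ C, (∀ m < n, ω' m = ω m) ∧ ∃ m ≥ n, ω' m ∈ T i) :
    ∃ ω ∈ C, ∀ i, ∃ᶠ n in atTop, ω n ∈ T i := by
  have : IsCompletelyMetrizableSpace C := hC.isCompletelyMetrizableSpace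
  have : Nonempty C := hne.to_subtype
  have hresidual : ∀ᶠ ω : C in residual C, ∀ i n, ∃ m ≥ n, ω.1 m ∈ T i := by
    refine eventually_countable_forall.2 fun i ↦ eventually_countable_forall.2 fun n ↦ ?_
    refine residual_of_dense_open ?_
      (dense_exists_mem_of_forall_exists_extension (fun ω hω k ↦ hext ω hω k i) n)
    have heval : ∀ m, Continuous fun ω : C ↦ ω.1 m := fun m ↦
      (continuous_apply m).comp continuous_subtype_val
    simp only [Set.ofPred_exists, Set.ofPred_and]
    exact isOpen_iUnion fun m ↦ isOpen_const.inter ((isOpen_discrete (T i)).preimage (heval m))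
  obtain ⟨ω, hω⟩ := (dense_of_mem_residual hresidual).nonempty
  exact ⟨ω, ω.2, fun i ↦ frequently_atTop.2 (hω i)⟩

namespace GameGraph

variable {Γ : GameGraph V} {p : Player} {σ τ : Strat V} {v : V} {ω ω' : ℕ → V}
  {Φ : Set (ℕ → V)}

theorem mem_verts_opp_iff : v ∈ Γ.verts p.opp ↔ v ∉ Γ.verts p := by
  cases p <;> simp [verts, Player.opp]

theorem playAux_fst (Γ : GameGraph V) (σ τ : Strat V) (v : V) (n : ℕ) :
    (Γ.playAux σ τ v n).1 = history (Γ.play σ τ v) n := by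
  induction n with
  | zero => rfl
  | succ n ih =>
    rw [history_succ, ← ih]
    rfl

theorem play_succ (Γ : GameGraph V) (σ τ : Strat V) (v : V) (n : ℕ) :
    Γ.play σ τ v (n + 1) = Γ.step σ τ (history (Γ.play σ τ v) n) (Γ.play σ τ v n) := by
  rw [← playAux_fst]
  rfl

theorem winPlay_zero (Γ : GameGraph V) (p : Player) (σ τ : Strat V) (v : V) :
    Γ.winPlay p σ τ v 0 = v := by
  cases p <;> rfl

theorem winPlay_succ_of_mem {n : ℕ} (h : Γ.winPlay p σ τ v n ∈ Γ.verts p) :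
    Γ.winPlay p σ τ v (n + 1) =
      σ (history (Γ.winPlay p σ τ v) n) (Γ.winPlay p σ τ v n) := by
  cases p with
  | one => exact (play_succ Γ σ τ v n).trans (if_pos h)
  | two => exact (play_succ Γ τ σ v n).trans (if_neg h)

theorem winPlay_succ_of_notMem {n : ℕ} (h : Γ.winPlay p σ τ v n ∉ Γ.verts p) :
    Γ.winPlay p σ τ v (n + 1) =
      τ (history (Γ.winPlay p σ τ v) n) (Γ.winPlay p σ τ v n) := by
  cases p with
  | one => exact (play_succ Γ σ τ v n).trans (if_neg h)
  | two => exact (play_succ Γ τ σ v n).trans (if_pos (not_not.1 h))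

/-- The plays from `v` consistent with the strategy `σ` of player `p`, without reference to a
strategy of the opponent. -/
def outcomes (Γ : GameGraph V) (p : Player) (σ : Strat V) (v : V) : Set (ℕ → V) :=
  {ω | ω 0 = v ∧ ∀ n, Γ.E (ω n) (ω (n + 1)) ∧
    (ω n ∈ Γ.verts p → ω (n + 1) = σ (history ω n) (ω n))}

theorem winPlay_mem_outcomes (hσ : Γ.ValidFor p σ) (hτ : Γ.ValidFor p.opp τ) (v : V) :
    Γ.winPlay p σ τ v ∈ Γ.outcomes p σ v := by
  refine ⟨winPlay_zero Γ p σ τ v, fun n ↦ ?_⟩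
  by_cases h : Γ.winPlay p σ τ v n ∈ Γ.verts p
  · rw [winPlay_succ_of_mem h]
    exact ⟨hσ _ _ h, fun _ ↦ rfl⟩
  · rw [winPlay_succ_of_notMem h]
    exact ⟨hτ _ _ (mem_verts_opp_iff.2 h), fun hmem ↦ absurd hmem h⟩

theorem winPlay_eq_of_forall_step (hω : ω ∈ Γ.outcomes p σ v)
    (hτ : ∀ n, ω n ∉ Γ.verts p → τ (history ω n) (ω n) = ω (n + 1)) :
    Γ.winPlay p σ τ v = ω := by
  funext n
  induction n using Nat.strong_induction_on with
  | _ n ih =>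
    cases n with
    | zero => exact (winPlay_zero Γ p σ τ v).trans hω.1.symm
    | succ n =>
      have hn : Γ.winPlay p σ τ v n = ω n := ih n n.lt_succ_self
      have hhist : history (Γ.winPlay p σ τ v) n = history ω n :=
        history_congr fun m hm ↦ ih m (hm.trans n.lt_succ_self)
      by_cases h : ω n ∈ Γ.verts p
      · rw [winPlay_succ_of_mem (hn ▸ h), hhist, hn]
        exact ((hω.2 n).2 h).symm
      · rw [winPlay_succ_of_notMem (hn ▸ h), hhist, hn]
        exact hτ n h

theorem exists_winPlay_eq_of_mem_outcomes (hΓ : Γ.NoDead) (hω : ω ∈ Γ.outcomes p σ v) :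
    ∃ τ, Γ.ValidFor p.opp τ ∧ Γ.winPlay p σ τ v = ω := by
  choose f hf using hΓ
  -- The opponent reads the current time off the length of the history.
  let τ : Strat V := fun l u ↦ if Γ.E u (ω (l.length + 1)) then ω (l.length + 1) else f u
  refine ⟨τ, fun l u _ ↦ ?_, winPlay_eq_of_forall_step hω fun n _ ↦ ?_⟩
  · dsimp only [τ]
    split_ifs with h
    exacts [h, hf u]
  · simp only [τ, length_history, if_pos (hω.2 n).1]

theorem outcomes_nonempty (hΓ : Γ.NoDead) (hσ : Γ.ValidFor p σ) (v : V) :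
    (Γ.outcomes p σ v).Nonempty := by
  choose f hf using hΓ
  exact ⟨_, winPlay_mem_outcomes (τ := fun _ ↦ f) hσ (fun _ u _ ↦ hf u) v⟩

theorem exists_outcome_append {n : ℕ} (hω : ω ∈ Γ.outcomes p σ v)
    (hω' : ω' ∈ Γ.outcomes p (fun l ↦ σ (history ω n ++ l)) (ω n)) :
    ∃ ω'' ∈ Γ.outcomes p σ v, (∀ m ≤ n, ω'' m = ω m) ∧ ∀ m, ω'' (n + m) = ω' m := by
  let ω'' : ℕ → V := fun m ↦ if m < n then ω m else ω' (m - n)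
  have hpre : ∀ m ≤ n, ω'' m = ω m := by
    intro m hm
    rcases hm.lt_or_eq with h | rfl
    · exact if_pos h
    · simpa [ω''] using hω'.1
  have hsuf : ∀ m, ω'' (n + m) = ω' m := by simp [ω'']
  refine ⟨ω'', ⟨(hpre 0 n.zero_le).trans hω.1, fun m ↦ ?_⟩, hpre, hsuf⟩
  rcases lt_or_ge m n with hm | hm
  · rw [hpre m hm.le, hpre (m + 1) hm, history_congr fun k hk ↦ hpre k (hk.trans hm).le]
    exact hω.2 m
  · obtain ⟨k, rfl⟩ := Nat.exists_eq_add_of_le hm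
    rw [history_add, history_congr fun j hj ↦ hpre j hj.le, funext hsuf, Nat.add_assoc, hsuf, hsuf]
    exact hω'.2 k

theorem isClosed_outcomes [TopologicalSpace V] [DiscreteTopology V] (Γ : GameGraph V)
    (p : Player) (σ : Strat V) (v : V) : IsClosed (Γ.outcomes p σ v) := by
  refine isClosed_of_closure_subset fun ω hω ↦ ?_
  have happrox : ∀ n, ∃ ω' ∈ Γ.outcomes p σ v, ∀ m < n, ω' m = ω m := by
    intro n
    obtain ⟨ω', hcyl, hω'⟩ := mem_closure_iff.1 hω _ (PiNat.isOpen_cylinder _ ω n)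
      (PiNat.self_mem_cylinder ω n)
    exact ⟨ω', hω', PiNat.mem_cylinder_iff.1 hcyl⟩
  refine ⟨?_, fun n ↦ ?_⟩
  · obtain ⟨ω', hω', h⟩ := happrox 1
    exact (h 0 one_pos).symm.trans hω'.1
  · obtain ⟨ω', hω', h⟩ := happrox (n + 2)
    rw [← h n (by lia), ← h (n + 1) (by lia), ← history_congr fun m hm ↦ h m (by lia)]
    exact hω'.2 n

/-- Player `p` has a strategy from `v` all of whose outcomes lie in `Φ`. -/
def Forces (Γ : GameGraph V) (p : Player) (Φ : Set (ℕ → V)) (v : V) : Prop :=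
  ∃ σ, Γ.ValidFor p σ ∧ Γ.outcomes p σ v ⊆ Φ

theorem Forces.mono {Ψ : Set (ℕ → V)} (h : Γ.Forces p Φ v) (hΦΨ : Φ ⊆ Ψ) : Γ.Forces p Ψ v :=
  h.imp fun _ hσ ↦ ⟨hσ.1, hσ.2.trans hΦΨ⟩

theorem dominion_iff_forces (hΓ : Γ.NoDead) {Ω : Set (ℕ → V)} {D : Set V} :
    Γ.Dominion p Ω D ↔ D.Nonempty ∧
      ∀ v ∈ D, Γ.Forces p {ω | p.sel (ω ∈ Ω) (ω ∉ Ω) ∧ ∀ n, ω n ∈ D} v := by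
  refine and_congr_right' (forall₂_congr fun v _ ↦ exists_congr fun σ ↦ and_congr_right fun hσ ↦ ?_)
  refine ⟨fun h ω hω ↦ ?_, fun h τ hτ ↦ h (winPlay_mem_outcomes hσ hτ v)⟩
  obtain ⟨τ, hτ, rfl⟩ := exists_winPlay_eq_of_mem_outcomes hΓ hω
  exact h τ hτ

theorem forces_of_forall_continuation {n : ℕ} (hσ : Γ.ValidFor p σ)
    (hω : ω ∈ Γ.outcomes p σ v)
    (h : ∀ ω' ∈ Γ.outcomes p σ v, (∀ m ≤ n, ω' m = ω m) → (fun m ↦ ω' (n + m)) ∈ Φ) :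
    Γ.Forces p Φ (ω n) := by
  refine ⟨fun l ↦ σ (history ω n ++ l), fun _ u hu ↦ hσ _ u hu, fun ω' hω' ↦ ?_⟩
  obtain ⟨ω'', hω'', hpre, hsuf⟩ := exists_outcome_append hω hω'
  simpa only [hsuf] using h ω'' hω'' hpre

theorem Forces.exists_mem (hΓ : Γ.NoDead) (h : Γ.Forces p Φ v) : ∃ ω ∈ Φ, ω 0 = v := by
  obtain ⟨σ, hσ, hσΦ⟩ := h
  obtain ⟨ω, hω⟩ := outcomes_nonempty hΓ hσ v
  exact ⟨ω, hσΦ hω, hω.1⟩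

theorem dominion_setOf_forces (hΓ : Γ.NoDead) {Ω : Set (ℕ → V)} (hΦ : SuffixClosed Φ)
    (hΦΩ : ∀ ω ∈ Φ, p.sel (ω ∈ Ω) (ω ∉ Ω)) (hne : ∃ v, Γ.Forces p Φ v) :
    Γ.Dominion p Ω {v | Γ.Forces p Φ v} := by
  refine (dominion_iff_forces hΓ).2 ⟨hne, fun v ⟨σ, hσ, hσΦ⟩ ↦ ⟨σ, hσ, fun ω hω ↦ ?_⟩⟩
  exact ⟨hΦΩ ω (hσΦ hω), fun n ↦
    forces_of_forall_continuation hσ hω fun ω' hω' _ ↦ hΦ ω' (hσΦ hω') n⟩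

theorem Forces.exists_forces_forall_notMem (hΓ : Γ.NoDead) {ι : Sort*} [Countable ι]
    {U : ι → Set V} (hΦ : SuffixClosed Φ)
    (h : Γ.Forces p (Φ ∩ {ω | ∃ i, ¬ ∃ᶠ n in atTop, ω n ∈ U i}) v) :
    ∃ i w, Γ.Forces p (Φ ∩ {ω | ∀ n, ω n ∉ U i}) w := by
  obtain ⟨σ, hσ, hσΦ⟩ := h
  by_contra! hno
  have hext : ∀ ω ∈ Γ.outcomes p σ v, ∀ n i,
      ∃ ω' ∈ Γ.outcomes p σ v, (∀ m < n, ω' m = ω m) ∧ ∃ m ≥ n, ω' m ∈ U i := by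
    intro ω hω n i
    by_contra! havoid
    refine hno i (ω n) (forces_of_forall_continuation hσ hω fun ω' hω' hpre ↦ ?_)
    exact ⟨hΦ ω' (hσΦ hω').1 n, fun m ↦
      havoid ω' hω' (fun k hk ↦ hpre k hk.le) (n + m) (n.le_add_right m)⟩
  let _ : TopologicalSpace V := ⊥
  have : DiscreteTopology V := ⟨rfl⟩
  obtain ⟨ω, hω, hfreq⟩ := exists_mem_forall_frequently_mem_of_isClosed
    (Γ.isClosed_outcomes p σ v) (outcomes_nonempty hΓ hσ v) hext
  obtain ⟨i, hi⟩ := (hσΦ hω).2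
  exact hi (hfreq i)

end GameGraph

/-- For `Ω = GenBuchiObj L` the objective is `GR1Obj L U`. -/
theorem gr1_dominion_has_sub_dominion_avoiding_U_general {Γ : GameGraph V} (hΓ : Γ.NoDead)
    {Ω : Set (ℕ → V)} (hΩ : SuffixClosed Ω) {ι : Sort*} [Countable ι] {U : ι → Set V} {D : Set V}
    (hU : ∀ ℓ, (D ∩ U ℓ).Finite)
    (hD : Γ.Dominion Player.two {ω | ω ∈ Ω → ω ∈ GenBuchiObj U} D) :
    ∃ D' ⊆ D, ∃ ℓ, D' ∩ U ℓ = ∅ ∧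
      Γ.Dominion Player.two {ω | ω ∈ Ω → ω ∈ GenBuchiObj U} D' := by
  let Φ : Set (ℕ → V) := Ω ∩ {ω | ∀ n, ω n ∈ D}
  have hΦ : SuffixClosed Φ := hΩ.inter (suffixClosed_forall_mem D)
  obtain ⟨⟨v, hv⟩, hforces⟩ := (GameGraph.dominion_iff_forces hΓ).1 hD
  have hwin : Γ.Forces .two (Φ ∩ {ω | ∃ ℓ, ¬ ∃ᶠ n in atTop, ω n ∈ U ℓ}) v := by
    refine (hforces v hv).mono fun ω ⟨hlose, hωD⟩ ↦ ?_
    obtain ⟨hωΩ, hωU⟩ := Classical.not_imp.1 hlose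
    obtain ⟨ℓ, hℓ⟩ := not_forall.1 hωU
    refine ⟨⟨hωΩ, hωD⟩, ℓ, fun hfreq ↦ hℓ ?_⟩
    have hfreqD : ∃ᶠ n in atTop, ω n ∈ D ∩ U ℓ := hfreq.mono fun n hn ↦ ⟨hωD n, hn⟩
    exact (infOcc_inter_nonempty_of_frequently_mem (hU ℓ) hfreqD).mono
      (Set.inter_subset_inter_right _ Set.inter_subset_right)
  obtain ⟨ℓ, hne⟩ := hwin.exists_forces_forall_notMem hΓ hΦ
  have hmem : ∀ w, Γ.Forces .two (Φ ∩ {ω | ∀ n, ω n ∉ U ℓ}) w → w ∈ D ∧ w ∉ U ℓ := by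
    intro w hw
    obtain ⟨ω, hω, rfl⟩ := hw.exists_mem hΓ
    exact ⟨hω.1.2 0, hω.2 0⟩
  refine ⟨_, fun w hw ↦ (hmem w hw).1, ℓ, ?_,
    GameGraph.dominion_setOf_forces hΓ (hΦ.inter (suffixClosed_forall_mem (U ℓ)ᶜ)) ?_ hne⟩
  · exact Set.disjoint_iff_inter_eq_empty.1 (Set.disjoint_left.2 fun w hw ↦ (hmem w hw).2)
  · intro ω ⟨⟨hωΩ, _⟩, havoid⟩ hωU
    obtain ⟨w, hw, hwU⟩ := hωU hωΩ ℓ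
    obtain ⟨n, -, rfl⟩ := hw 0
    exact havoid n hwU

/-- every player-2 dominion `D` of a GR(1) game contains a
player-2 dominion `D' ⊆ D` avoiding some guarantee set `U ℓ`. -/
theorem gr1_dominion_has_sub_dominion_avoiding_U {V : Type u} [Finite V]
    (Γ : GameGraph V) (hΓ : Γ.NoDead) {k₁ k₂ : ℕ}
    (L : Fin k₁ → Set V) (U : Fin k₂ → Set V) (D : Set V)
    (hD : Γ.Dominion Player.two (GR1Obj L U) D) :
    ∃ D' ⊆ D, ∃ ℓ : Fin k₂, D' ∩ U ℓ = ∅ ∧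
      Γ.Dominion Player.two (GR1Obj L U) D' := by
  exact gr1_dominion_has_sub_dominion_avoiding_U_general hΓ
    (prefixIndep_genBuchiObj L).suffixClosed (fun _ ↦ Set.toFinite _) hD
end

section
/- Let Γ = ((V,E),(V₁,V₂)) be a game graph with target sets T₁,…,T_k ⊆ V and parameter h with 1 ≤ h ≤ |V|, let (ρ_ℓ)_{1≤ℓ≤k} be the associated progress measure (the least fixed point of the update operator), and let W = {v ∈ V | ρ_ℓ(v) < ∞ for some ℓ}. Then for every vertex v and index ℓ with ρ_ℓ(v) < ∞, player 1 has a strategy to reach the set {v' ∈ T_ℓ | ρ_ℓ(v') = 0} from v, against any strategy of player 2, such that the play visits only vertices of W until that set is reached. -/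
open Classical

universe u

variable {V : Type u}

/-!
A finite value `ρ ℓ v` bounds the number of moves player 1 needs to reach `T ℓ`: off `T ℓ` the best
successor has a strictly smaller value, so player 1 can always move to a smaller value and player 2
cannot avoid doing so. As `ℕ∞` is well-founded, the play must enter `T ℓ`, and until then every
value is finite. The bound `n̄` only decides when values jump to `∞`, so the descent is the same for
every `n̄`, including the `0` that `nbar` yields when `ncard` sees an infinite complement. Leastness
of `ρ` gives value `0` on arrival: lowering every finite value on the target sets to `0` yields
another fixed point.
-/

theorem exists_and_forall_le_of_lt_until {α : Type*} [Preorder α] [WellFoundedLT α]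
    {u : ℕ → α} {P : ℕ → Prop}
    (hlt : ∀ n, u n ≤ u 0 → ¬ P n → u (n + 1) < u n) :
    ∃ n, P n ∧ ∀ m ≤ n, u m ≤ u 0 := by
  have le_init : ∀ n, (∀ m < n, ¬ P m) → u n ≤ u 0 := by
    intro n
    induction n with
    | zero => exact fun _ => le_rfl
    | succ n ih =>
      intro hP
      have hn : u n ≤ u 0 := ih fun m hm => hP m (hm.trans n.lt_succ_self)
      exact (hlt n hn (hP n n.lt_succ_self)).le.trans hn
  have hex : ∃ n, P n := by
    by_contra! hP
    exact not_strictAnti_of_wellFoundedLT u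
      (strictAnti_nat_of_succ_lt fun n => hlt n (le_init n fun m _ => hP m) (hP n))
  exact ⟨Nat.find hex, Nat.find_spec hex, fun m hm =>
    le_init m fun _ hj => Nat.find_min hex (hj.trans_le hm)⟩

namespace GameGraph

/-- Player 1 can force the ranking `r` to decrease in one move from `v`: some successor of a
player-1 vertex, respectively every successor of a player-2 vertex, has a smaller rank. -/
def ForcesDecrease {α : Type*} [LT α] (Γ : GameGraph V) (r : V → α) (v : V) : Prop :=
  (v ∈ Γ.P1 → ∃ w, Γ.E v w ∧ r w < r v) ∧ (v ∉ Γ.P1 → ∀ w, Γ.E v w → r w < r v)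

theorem exists_memoryless_step_lt {α : Type*} [LT α] {Γ : GameGraph V} (hΓ : Γ.NoDead)
    (r : V → α) :
    ∃ σ, Memoryless σ ∧ Γ.ValidFor Player.one σ ∧ ∀ τ, Γ.ValidFor Player.two τ →
      ∀ hist v, Γ.ForcesDecrease r v → r (Γ.step σ τ hist v) < r v := by
  have hsucc : ∀ v, ∃ w, Γ.E v w ∧ ((∃ w', Γ.E v w' ∧ r w' < r v) → r w < r v) := by
    intro v
    by_cases hdec : ∃ w', Γ.E v w' ∧ r w' < r v
    · obtain ⟨w, hw, hlt⟩ := hdec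
      exact ⟨w, hw, fun _ => hlt⟩
    · obtain ⟨w, hw⟩ := hΓ v
      exact ⟨w, hw, fun h => absurd h hdec⟩
  choose f hf hf_lt using hsucc
  refine ⟨fun _ => f, fun _ _ _ => rfl, fun _ v _ => hf v, fun τ hτ hist v hv => ?_⟩
  unfold step
  split_ifs with hv1
  · exact hf_lt v (hv.1 hv1)
  · exact hv.2 hv1 _ (hτ hist v hv1)

theorem exists_memoryless_reach_of_forcesDecrease {α : Type*} [Preorder α] [WellFoundedLT α]
    {Γ : GameGraph V} (hΓ : Γ.NoDead) {r : V → α} {c : α} {A : Set V}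
    (hdec : ∀ v, r v < c → v ∉ A → Γ.ForcesDecrease r v) :
    ∃ σ, Memoryless σ ∧ Γ.ValidFor Player.one σ ∧ ∀ v, r v < c → ∀ τ, Γ.ValidFor Player.two τ →
      ∃ n, Γ.play σ τ v n ∈ A ∧ ∀ m ≤ n, r (Γ.play σ τ v m) ≤ r v := by
  obtain ⟨σ, hmem, hσ, hstep⟩ := exists_memoryless_step_lt hΓ r
  refine ⟨σ, hmem, hσ, fun v hv τ hτ => ?_⟩
  exact exists_and_forall_le_of_lt_until (u := fun n => r (Γ.play σ τ v n)) fun n hle hA =>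
    hstep τ hτ (Γ.playAux σ τ v n).1 _ (hdec _ (hle.trans_lt hv) hA)

end GameGraph

section Increment

variable {h k : ℕ} {T : Fin k → Set V} {ℓ : Fin k} {v : V}

theorem pmIncr_top : pmIncr h T ℓ v ⊤ = ⊤ := by
  simp [pmIncr]

theorem pmIncr_of_mem {x : ℕ∞} (hv : v ∈ T ℓ) (hx : x ≠ ⊤) : pmIncr h T ℓ v x = 0 :=
  if_pos ⟨hv, hx⟩

theorem pmIncr_of_notMem {x : ℕ∞} (hv : v ∉ T ℓ) :
    pmIncr h T ℓ v x = if x < (nbar h (T ℓ) : ℕ∞) then x + 1 else ⊤ :=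
  if_neg fun hx => hv hx.1

theorem pmIncr_mono : Monotone (pmIncr h T ℓ v) := by
  intro x y hxy
  rcases eq_or_ne y ⊤ with rfl | hy
  · exact le_top.trans_eq pmIncr_top.symm
  by_cases hv : v ∈ T ℓ
  · rw [pmIncr_of_mem hv (ne_top_of_le_ne_top hy hxy), pmIncr_of_mem hv hy]
  · rw [pmIncr_of_notMem hv, pmIncr_of_notMem hv]
    split_ifs with hx hy' hy'
    · gcongr
    · exact le_top
    · exact absurd (hxy.trans_lt hy') hx
    · exact le_rfl

theorem lt_of_pmIncr_le {x y : ℕ∞} (hv : v ∉ T ℓ) (hy : y ≠ ⊤) (hxy : pmIncr h T ℓ v x ≤ y) :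
    x < y := by
  rw [pmIncr_of_notMem hv] at hxy
  split_ifs at hxy with hx
  · exact (ENat.add_one_le_iff hx.ne_top).mp hxy
  · exact absurd (top_le_iff.mp hxy) hy

end Increment

namespace GameGraph

variable {Γ : GameGraph V} {h k : ℕ} {T : Fin k → Set V} {ρ : Fin k → V → ℕ∞} {ℓ : Fin k} {v : V}

theorem best_mono : Monotone (Γ.best T) := by
  intro ρ ρ' hle ℓ v
  unfold best
  dsimp only
  by_cases hv : v ∈ Γ.P1
  · simpa only [if_pos hv] using iInf₂_mono fun w _ => hle _ w
  · simpa only [if_neg hv] using iSup₂_mono fun w _ => hle _ w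

theorem forcesDecrease_of_best_lt (hv : v ∉ T ℓ) (hlt : Γ.best T ρ ℓ v < ρ ℓ v) :
    Γ.ForcesDecrease (ρ ℓ) v := by
  simp only [best, if_neg hv] at hlt
  constructor
  · intro hv1
    rw [if_pos hv1] at hlt
    simpa only [iInf_lt_iff, Set.mem_ofPred_eq, exists_prop] using hlt
  · intro hv1 w hw
    rw [if_neg hv1] at hlt
    exact (le_iSup₂ (f := fun w (_ : w ∈ {w | Γ.E v w}) => ρ ℓ w) w hw).trans_lt hlt

theorem pmStep_eq_self_iff :
    Γ.pmStep h T ρ = ρ ↔ ∀ ℓ v, pmIncr h T ℓ v (Γ.best T ρ ℓ v) ≤ ρ ℓ v := by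
  simp only [funext_iff, pmStep, max_eq_left_iff]

theorem forcesDecrease_of_pmStep_eq_self (hfix : Γ.pmStep h T ρ = ρ) (hv : v ∉ T ℓ)
    (hfin : ρ ℓ v ≠ ⊤) : Γ.ForcesDecrease (ρ ℓ) v :=
  forcesDecrease_of_best_lt hv (lt_of_pmIncr_le hv hfin (pmStep_eq_self_iff.mp hfix ℓ v))

/-- The functions `ρ` with every finite value on a target set lowered to `0`, a competitor against
which leastness of the progress measure is tested. -/
noncomputable def lowerOnTargets (T : Fin k → Set V) (ρ : Fin k → V → ℕ∞) : Fin k → V → ℕ∞ :=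
  fun ℓ v => if v ∈ T ℓ ∧ ρ ℓ v ≠ ⊤ then 0 else ρ ℓ v

theorem lowerOnTargets_le : lowerOnTargets T ρ ≤ ρ := by
  intro ℓ v
  unfold lowerOnTargets
  split_ifs
  · exact zero_le
  · exact le_rfl

theorem pmStep_lowerOnTargets (hfix : Γ.pmStep h T ρ = ρ) :
    Γ.pmStep h T (lowerOnTargets T ρ) = lowerOnTargets T ρ := by
  refine pmStep_eq_self_iff.mpr fun ℓ v => ?_
  have hle : pmIncr h T ℓ v (Γ.best T (lowerOnTargets T ρ) ℓ v) ≤ ρ ℓ v :=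
    (pmIncr_mono (best_mono lowerOnTargets_le ℓ v)).trans (pmStep_eq_self_iff.mp hfix ℓ v)
  by_cases hv : v ∈ T ℓ ∧ ρ ℓ v ≠ ⊤
  · have hbest : Γ.best T (lowerOnTargets T ρ) ℓ v ≠ ⊤ := by
      intro htop
      rw [htop, pmIncr_top] at hle
      exact hv.2 (top_le_iff.mp hle)
    rw [pmIncr_of_mem hv.1 hbest]
    exact zero_le
  · exact hle.trans_eq (if_neg hv).symm

theorem IsProgressMeasure.eq_zero_of_mem (hρ : Γ.IsProgressMeasure h T ρ) (hv : v ∈ T ℓ)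
    (hfin : ρ ℓ v ≠ ⊤) : ρ ℓ v = 0 :=
  nonpos_iff_eq_zero.mp <|
    (hρ.2 _ (pmStep_lowerOnTargets hρ.1) ℓ v).trans_eq (if_pos ⟨hv, hfin⟩)

end GameGraph

theorem progress_measure_reach_target_general {V : Type u} (Γ : GameGraph V) (hΓ : Γ.NoDead)
    {k : ℕ} (T : Fin k → Set V) (h : ℕ) (ρ : Fin k → V → ℕ∞) (hρ : Γ.IsProgressMeasure h T ρ)
    (ℓ : Fin k) :
    ∃ σ, Memoryless σ ∧ Γ.ValidFor Player.one σ ∧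
      ∀ v, ρ ℓ v ≠ ⊤ → ∀ τ, Γ.ValidFor Player.two τ →
        ∃ n, Γ.play σ τ v n ∈ {v' | v' ∈ T ℓ ∧ ρ ℓ v' = 0} ∧
          ∀ m ≤ n, ρ ℓ (Γ.play σ τ v m) ≤ ρ ℓ v := by
  obtain ⟨σ, hmem, hσ, hreach⟩ :=
    GameGraph.exists_memoryless_reach_of_forcesDecrease (r := ρ ℓ) (c := ⊤) (A := T ℓ) hΓ
      fun v hv hvT => GameGraph.forcesDecrease_of_pmStep_eq_self hρ.1 hvT hv.ne
  refine ⟨σ, hmem, hσ, fun v hv τ hτ => ?_⟩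
  obtain ⟨n, hn, hle⟩ := hreach v hv.lt_top τ hτ
  have hzero : ρ ℓ (Γ.play σ τ v n) = 0 :=
    hρ.eq_zero_of_mem hn (ne_top_of_le_ne_top hv (hle n le_rfl))
  exact ⟨n, ⟨hn, hzero⟩, hle⟩

/-- for the progress measure `ρ`, if `ρ ℓ v < ∞` then player 1
has a strategy to reach `{v' ∈ T ℓ | ρ ℓ v' = 0}` from `v` against any player-2
strategy, visiting only vertices of `W = {u | ∃ ℓ', ρ ℓ' u < ∞}` until that set
is reached. -/
theorem progress_measure_reach_target {V : Type u} [Finite V]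
    (Γ : GameGraph V) (hΓ : Γ.NoDead) {k : ℕ} (T : Fin k → Set V)
    (h : ℕ) (hh1 : 1 ≤ h) (hh2 : h ≤ Nat.card V)
    (ρ : Fin k → V → ℕ∞) (hρ : Γ.IsProgressMeasure h T ρ)
    (v : V) (ℓ : Fin k) (hfin : ρ ℓ v ≠ ⊤) :
    ∃ σ, Γ.ValidFor Player.one σ ∧ ∀ τ, Γ.ValidFor Player.two τ →
      ∃ n, Γ.play σ τ v n ∈ {v' | v' ∈ T ℓ ∧ ρ ℓ v' = 0} ∧
        ∀ m ≤ n, Γ.play σ τ v m ∈ {u | ∃ ℓ' : Fin k, ρ ℓ' u ≠ ⊤} := by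
  obtain ⟨σ, -, hσ, hreach⟩ := progress_measure_reach_target_general Γ hΓ T h ρ hρ ℓ
  exact ⟨σ, hσ, fun τ hτ => (hreach v hfin τ hτ).imp fun _ hn =>
    ⟨hn.1, fun m hm => ⟨ℓ, ne_top_of_le_ne_top hfin (hn.2 m hm)⟩⟩⟩
end

section
/- Let Γ = ((V,E),(V₁,V₂)) be a game graph with GR(1) objective given by target sets L₁,…,L_{k₁} and U₁,…,U_{k₂}, let {G_i} and {Z_i} be its hierarchical graph decomposition and exception sets, and for indices i ≥ 1 and 1 ≤ ℓ ≤ k₂ let Y_{i,ℓ} = Attr₁(Γ_i, U_ℓ ∪ Z_i). Suppose D ⊆ V is a set such that player 2 has, from every vertex of D, a strategy in Γ that guarantees, against any strategy of player 1, that the play stays in D and visits every set L_t (1 ≤ t ≤ k₁) infinitely often; suppose further D ∩ U_ℓ = ∅ and |Attr₂(Γ,D)| ≤ 2^i. Then D ⊆ V ∖ Y_{i,ℓ}, and player 2 has, from every vertex of D, a strategy in the induced game graph Γ_i[V ∖ Y_{i,ℓ}] that guarantees, against any strategy of player 1, that the play stays in D and visits every set L_t ∖ Y_{i,ℓ} infinitely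 often. -/
open Classical

universe u

variable {V : Type u}

/-!
A set from which player 2 can force the play to stay inside it is closed under player-1 moves, and a
`p`-closed set disjoint from `U` is disjoint from the `p`-attractor of `U`. In `Γ_i`, incoming edges
from player-2 vertices come first, and every player-2 predecessor of a vertex of `D` lies in
`Attr₂(Γ, D)`; hence if this attractor has at most `2 ^ i` elements, `Γ_i` keeps all player-2 edges
into `D`. So `D` is still closed under player-1 moves in `Γ_i` and, player-1 vertices of `D` having
out-degree at most `|Attr₂(Γ, D)|`, it avoids `Z_i`, and therefore also `Y`. A player-2 strategy of
`Γ` that stays in `D` only uses edges into `D`, so it can be replayed in `Γ_i[V ∖ Y]`; there every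
player-1 strategy is the restriction of one in `Γ`, so the plays coincide.
-/

namespace GameGraph

variable {W : Type*} {Γ : GameGraph V} {Γ' : GameGraph W} {p : Player}

theorem verts_opp (Γ : GameGraph V) (p : Player) : Γ.verts p.opp = (Γ.verts p)ᶜ := by
  cases p <;> simp only [verts, Player.opp, compl_compl]

theorem step_sel_of_mem {v : V} (hv : v ∈ Γ.verts p) (σ τ : Strat V) (hist : List V) :
    Γ.step (p.sel σ τ) (p.sel τ σ) hist v = σ hist v := by
  cases p
  · exact if_pos hv
  · exact if_neg hv

theorem step_sel_of_mem_opp {v : V} (hv : v ∈ Γ.verts p.opp) (σ τ : Strat V) (hist : List V) :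
    Γ.step (p.sel σ τ) (p.sel τ σ) hist v = τ hist v := by
  cases p
  · exact if_neg hv
  · exact if_pos hv

theorem exists_validFor (h : ∀ v ∈ Γ.verts p, ∃ w, Γ.E v w) : ∃ σ, Γ.ValidFor p σ :=
  ⟨fun _ v => if hv : ∃ w, Γ.E v w then hv.choose else v, fun _ v hv => by
    simpa only [dif_pos (h v hv)] using (h v hv).choose_spec⟩

theorem ValidFor.update {σ : Strat V} (hσ : Γ.ValidFor p σ) {v w : V} (hE : Γ.E v w) :
    Γ.ValidFor p fun hist => Function.update (σ hist) v w := by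
  intro hist x hx
  rcases eq_or_ne x v with rfl | hne
  · simpa only [Function.update_self] using hE
  · simpa only [Function.update_of_ne hne] using hσ hist x hx

theorem pClosed_of_forcesStayBuchi (hΓ : ∀ v ∈ Γ.verts p.opp, ∃ w, Γ.E v w)
    {ι : Sort*} {T : ι → Set V} {D : Set V} (h : ∀ v ∈ D, Γ.ForcesStayBuchi p D T v) :
    Γ.PClosed p.opp D := by
  intro v hv
  obtain ⟨σ, hσ, hwin⟩ := h v hv
  obtain ⟨τ, hτ⟩ := exists_validFor hΓ
  refine ⟨fun hvopp w hE => ?_, fun hvp => ?_⟩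
  · have hfirst := (hwin _ (hτ.update hE)).1 1
    change Γ.step _ _ [] v ∈ D at hfirst
    rwa [step_sel_of_mem_opp hvopp, Function.update_self] at hfirst
  · rw [verts_opp, verts_opp, compl_compl] at hvp
    have hfirst := (hwin τ hτ).1 1
    change Γ.step _ _ [] v ∈ D at hfirst
    rw [step_sel_of_mem hvp] at hfirst
    exact ⟨σ [] v, hσ [] v hvp, hfirst⟩

theorem subset_attr (Γ : GameGraph V) (p : Player) (U : Set V) : U ⊆ Γ.attr p U :=
  fun _ => Attr.base

theorem PClosed.disjoint_attr {D U : Set V} (hD : Γ.PClosed p D) (hdis : Disjoint D U) :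
    Disjoint D (Γ.attr p U) := by
  refine Set.disjoint_right.mpr fun v (hv : Γ.Attr p U v) => ?_
  induction hv with
  | base hU => exact Set.disjoint_right.mp hdis hU
  | own hp hE _ ih => exact fun hvD => ih ((hD _ hvD).1 hp _ hE)
  | opp hopp _ ih =>
    intro hvD
    obtain ⟨w, hE, hwD⟩ := (hD _ hvD).2 hopp
    exact ih w hE hwD

theorem pClosed_compl_attr (Γ : GameGraph V) (p : Player) (U : Set V) :
    Γ.PClosed p (Γ.attr p U)ᶜ := by
  refine fun v hv => ⟨fun hp w hE hw => hv (Attr.own hp hE hw), fun hopp => ?_⟩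
  by_contra! hall
  exact hv (Attr.opp hopp fun w hE => not_not.mp (hall w hE))

theorem PClosed.exists_E_sub {X : Set V} (hX : Γ.PClosed p.opp X) :
    ∀ x ∈ (Γ.sub X).verts p, ∃ y, (Γ.sub X).E x y := by
  intro x hx
  have hxp : (x : V) ∈ Γ.verts p.opp.opp := by cases p <;> exact hx
  obtain ⟨w, hE, hw⟩ := (hX x x.2).2 hxp
  exact ⟨⟨w, hw⟩, hE⟩

theorem playAux_map {f : W → V} {σ π : Strat V} {σ' π' : Strat W} {D : Set V} {v : W}
    (hstep : ∀ (hist : List W) x, Γ.step σ π (hist.map f) (f x) ∈ D →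
      f (Γ'.step σ' π' hist x) = Γ.step σ π (hist.map f) (f x))
    (hstay : ∀ n, Γ.play σ π (f v) n ∈ D) (n : ℕ) :
    Γ.playAux σ π (f v) n = Prod.map (List.map f) f (Γ'.playAux σ' π' v n) := by
  induction n with
  | zero => rfl
  | succ n ih =>
    have hnext := hstay (n + 1)
    simp only [play, playAux, ih, Prod.map] at hnext ⊢
    rw [hstep _ _ hnext, List.map_append, List.map_singleton]

-- `σ₀` fixes the moves where `σ` would leave `D`; a play that stays in `D` never consults it.
theorem ValidFor.exists_comap {f : W → V} {D : Set V} (hD : D ⊆ Set.range f)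
    (hverts : Γ'.verts p ⊆ f ⁻¹' Γ.verts p)
    (hE : ∀ x y, x ∈ Γ'.verts p → f y ∈ D → Γ.E (f x) (f y) → Γ'.E x y)
    {σ : Strat V} (hσ : Γ.ValidFor p σ) {σ₀ : Strat W} (hσ₀ : Γ'.ValidFor p σ₀) :
    ∃ σ', Γ'.ValidFor p σ' ∧
      ∀ (hist : List W) x, σ (hist.map f) (f x) ∈ D → f (σ' hist x) = σ (hist.map f) (f x) := by
  have hmove : ∀ (hist : List W) x, ∃ y, (x ∈ Γ'.verts p → Γ'.E x y) ∧
      (σ (hist.map f) (f x) ∈ D → f y = σ (hist.map f) (f x)) := by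
    intro hist x
    by_cases hmem : σ (hist.map f) (f x) ∈ D
    · obtain ⟨y, hy⟩ := hD hmem
      refine ⟨y, fun hx => hE x y hx (hy ▸ hmem) ?_, fun _ => hy⟩
      exact hy ▸ hσ _ _ (hverts hx)
    · exact ⟨σ₀ hist x, hσ₀ hist x, fun h => absurd h hmem⟩
  choose σ' hvalid hagree using hmove
  exact ⟨σ', hvalid, hagree⟩

theorem ValidFor.exists_map {f : W → V} (hf : f.Injective)
    (hverts : f ⁻¹' Γ.verts p ⊆ Γ'.verts p)
    (hE : ∀ x y, x ∈ Γ'.verts p → Γ'.E x y → Γ.E (f x) (f y))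
    {τ' : Strat W} (hτ' : Γ'.ValidFor p τ') {τ₀ : Strat V} (hτ₀ : Γ.ValidFor p τ₀) :
    ∃ τ, Γ.ValidFor p τ ∧ ∀ (hist : List W) x, τ (hist.map f) (f x) = f (τ' hist x) := by
  let F : List W × W → List V × V := Prod.map (List.map f) f
  have hF : F.Injective := (List.map_injective_iff.mpr hf).prodMap hf
  let τ : List V × V → V := Function.extend F (fun q => f (τ' q.1 q.2)) fun q => τ₀ q.1 q.2
  have hτ : ∀ q, τ (F q) = f (τ' q.1 q.2) := hF.extend_apply _ _
  refine ⟨fun hist v => τ (hist, v), fun hist v hv => ?_, fun hist x => hτ (hist, x)⟩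
  by_cases hq : ∃ q, F q = (hist, v)
  · obtain ⟨⟨hist', x⟩, hq⟩ := hq
    obtain ⟨rfl, rfl⟩ := Prod.mk.inj hq
    have hx := hverts hv
    simpa only [← hq, hτ] using hE x _ hx (hτ' hist' x hx)
  · simpa only [τ, Function.extend_apply' _ _ _ hq] using hτ₀ hist v hv

theorem ForcesStayBuchi.comap {f : W → V} (hf : f.Injective) {D : Set V} (hD : D ⊆ Set.range f)
    (hverts : f ⁻¹' Γ.verts p = Γ'.verts p)
    (hE : ∀ x y, x ∈ Γ'.verts p → f y ∈ D → Γ.E (f x) (f y) → Γ'.E x y)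
    (hEopp : ∀ x y, x ∈ Γ'.verts p.opp → Γ'.E x y → Γ.E (f x) (f y))
    (hΓ : ∀ v ∈ Γ.verts p.opp, ∃ w, Γ.E v w) (hΓ' : ∀ x ∈ Γ'.verts p, ∃ y, Γ'.E x y)
    {ι : Sort*} {T : ι → Set V} {v : W} (h : Γ.ForcesStayBuchi p D T (f v)) :
    Γ'.ForcesStayBuchi p (f ⁻¹' D) (fun t => f ⁻¹' T t) v := by
  have hvertsOpp : f ⁻¹' Γ.verts p.opp = Γ'.verts p.opp := by
    rw [verts_opp, verts_opp, Set.preimage_compl, hverts]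
  obtain ⟨σ, hσ, hwin⟩ := h
  obtain ⟨σ₀, hσ₀⟩ := exists_validFor hΓ'
  obtain ⟨τ₀, hτ₀⟩ := exists_validFor hΓ
  obtain ⟨σ', hσ', hσσ'⟩ := hσ.exists_comap hD hverts.ge hE hσ₀
  refine ⟨σ', hσ', fun τ' hτ' => ?_⟩
  obtain ⟨τ, hτ, hττ'⟩ := hτ'.exists_map hf hvertsOpp.le hEopp hτ₀
  obtain ⟨hstay, hvisit⟩ := hwin τ hτ
  have hplay : ∀ n, Γ.winPlay p σ τ (f v) n = f (Γ'.winPlay p σ' τ' v n) := by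
    refine fun n => congrArg Prod.snd (playAux_map (D := D) (fun hist x hmem => ?_) hstay n)
    by_cases hx : x ∈ Γ'.verts p
    · have hfx : f x ∈ Γ.verts p := hverts.ge hx
      rw [step_sel_of_mem hfx] at hmem ⊢
      rw [step_sel_of_mem hx, hσσ' hist x hmem]
    · have hxopp : x ∈ Γ'.verts p.opp := by rwa [verts_opp]
      have hfx : f x ∈ Γ.verts p.opp := hvertsOpp.ge hxopp
      rw [step_sel_of_mem_opp hfx, step_sel_of_mem_opp hxopp, hττ']
  simp only [hplay] at hstay hvisit
  exact ⟨hstay, hvisit⟩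

end GameGraph

namespace HierDecomp

variable {Γ : GameGraph V} (H : HierDecomp Γ) {i : ℕ} {D : Set V} {v w : V}

theorem image_idx (w : V) : H.idx w '' {u | Γ.E u w} = Set.Iio {u | Γ.E u w}.ncard := by
  have hinj : Set.InjOn (H.idx w) {u | Γ.E u w} := fun u hu u' hu' => H.idx_inj w u u' hu hu'
  refine Set.eq_of_subset_of_ncard_le (Set.image_subset_iff.mpr (H.idx_lt w)) ?_
    (Set.finite_Iio _)
  rw [hinj.ncard_image, Set.ncard_Iio_nat]

theorem idx_lt_ncard_setOf_notMem_P1 (hv : v ∉ Γ.P1) (hE : Γ.E v w) :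
    H.idx w v < {u | u ∉ Γ.P1 ∧ Γ.E u w}.ncard := by
  have hfin : {u | u ∉ Γ.P1 ∧ Γ.E u w}.Finite :=
    (Set.finite_of_ncard_pos ((Nat.zero_le _).trans_lt (H.idx_lt w v hE))).subset fun _ hu => hu.2
  have hsub : Set.Iic (H.idx w v) ⊆ H.idx w '' {u | u ∉ Γ.P1 ∧ Γ.E u w} := by
    intro j hj
    obtain ⟨u, hu, rfl⟩ := (H.image_idx w).ge (lt_of_le_of_lt hj (H.idx_lt w v hE))
    exact ⟨u, ⟨fun hu1 => (H.p2_first w v u hE hu hv hu1).not_ge hj, hu⟩, rfl⟩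
  calc H.idx w v < (Set.Iic (H.idx w v)).ncard := by
        rw [Set.ncard_Iic_nat]; exact Nat.lt_succ_self _
    _ ≤ (H.idx w '' {u | u ∉ Γ.P1 ∧ Γ.E u w}).ncard :=
        Set.ncard_le_ncard hsub (hfin.image _)
    _ ≤ {u | u ∉ Γ.P1 ∧ Γ.E u w}.ncard := Set.ncard_image_le hfin

theorem graph_E_of_mem (hfin : (Γ.attr .two D).Finite) (hsize : (Γ.attr .two D).ncard ≤ 2 ^ i)
    (hv : v ∉ Γ.P1) (hE : Γ.E v w) (hw : w ∈ D) : (H.graph i).E v w := by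
  have hpred : {u | u ∉ Γ.P1 ∧ Γ.E u w} ⊆ Γ.attr .two D :=
    fun u hu => .own hu.1 hu.2 (.base hw)
  refine ⟨hE, .inr ?_⟩
  calc H.idx w v < {u | u ∉ Γ.P1 ∧ Γ.E u w}.ncard := H.idx_lt_ncard_setOf_notMem_P1 hv hE
    _ ≤ (Γ.attr .two D).ncard := Set.ncard_le_ncard hpred hfin
    _ ≤ 2 ^ i := hsize

theorem pClosed_graph (hD : Γ.PClosed .one D) (hfin : (Γ.attr .two D).Finite)
    (hsize : (Γ.attr .two D).ncard ≤ 2 ^ i) : (H.graph i).PClosed .one D := by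
  refine fun v hv => ⟨fun hv1 w hE => (hD v hv).1 hv1 w hE.1, fun hv2 => ?_⟩
  obtain ⟨w, hE, hw⟩ := (hD v hv).2 hv2
  exact ⟨w, H.graph_E_of_mem hfin hsize hv2 hE hw, hw⟩

theorem disjoint_Z (hD : Γ.PClosed .one D) (hfin : (Γ.attr .two D).Finite)
    (hsize : (Γ.attr .two D).ncard ≤ 2 ^ i) : Disjoint D (H.Z i) := by
  refine Set.disjoint_left.mpr fun v hv hZ => ?_
  rcases hZ with ⟨hv2, hdead⟩ | ⟨hv1, hdeg⟩
  · obtain ⟨w, hE, -⟩ := (H.pClosed_graph hD hfin hsize v hv).2 hv2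
    exact hdead ⟨w, hE⟩
  · have hsucc : {w | Γ.E v w} ⊆ Γ.attr .two D :=
      fun w hE => Γ.subset_attr .two D ((hD v hv).1 hv1 w hE)
    exact hdeg.not_ge ((Set.ncard_le_ncard hsucc hfin).trans hsize)

end HierDecomp

theorem hier_gr1_dominion_size_general {Γ : GameGraph V} (hΓ : Γ.NoDead) (H : HierDecomp Γ)
    {ι : Sort*} {L : ι → Set V} {U : Set V} {i : ℕ} {Y : Set V}
    (hY : Y = (H.graph i).attr .one (U ∪ H.Z i)) {D : Set V}
    (hforce : ∀ v ∈ D, Γ.ForcesStayBuchi .two D L v) (hdis : Disjoint D U)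
    (hfin : (Γ.attr .two D).Finite) (hsize : (Γ.attr .two D).ncard ≤ 2 ^ i) :
    D ⊆ Yᶜ ∧ ∀ v : ↥Yᶜ, (v : V) ∈ D →
      ((H.graph i).sub Yᶜ).ForcesStayBuchi .two {x : ↥Yᶜ | (x : V) ∈ D}
        (fun t => {x : ↥Yᶜ | (x : V) ∈ L t \ Y}) v := by
  have hD : Γ.PClosed .one D :=
    GameGraph.pClosed_of_forcesStayBuchi (fun v _ => hΓ v) hforce
  have hYc : (H.graph i).PClosed .one Yᶜ := hY ▸ GameGraph.pClosed_compl_attr _ _ _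
  have hDY : D ⊆ Yᶜ := by
    rw [Set.subset_compl_iff_disjoint_right, hY]
    exact (H.pClosed_graph hD hfin hsize).disjoint_attr
      (hdis.union_right (H.disjoint_Z hD hfin hsize))
  have htargets : (fun t => {x : ↥Yᶜ | (x : V) ∈ L t \ Y}) = fun t => Subtype.val ⁻¹' L t :=
    funext fun t => Set.ext fun x => and_iff_left x.2
  refine ⟨hDY, fun v hv => ?_⟩
  rw [htargets]
  exact (hforce v hv).comap (p := .two) (Γ' := (H.graph i).sub Yᶜ) Subtype.val_injective
    (hDY.trans Subtype.range_coe.ge) rfl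
    (fun _ _ hx hy hE => H.graph_E_of_mem hfin hsize hx hE hy) (fun _ _ _ hE => hE.1)
    (fun v _ => hΓ v) hYc.exists_E_sub

/-- with `Y = Attr₁(Γ_i, U ℓ ∪ Z_i)`, if player 2 can force from
every vertex of `D` (in `Γ`) that the play stays in `D` and visits every `L t`
infinitely often, `D ∩ U ℓ = ∅` and `|Attr₂(Γ,D)| ≤ 2^i`, then `D ⊆ V ∖ Y` and
player 2 can force, from every vertex of `D` in the induced subgame
`Γ_i[V ∖ Y]`, that the play stays in `D` and visits every `L t ∖ Y` infinitely
often. -/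
theorem hier_gr1_dominion_size {V : Type u} [Finite V]
    (Γ : GameGraph V) (hΓ : Γ.NoDead) (H : HierDecomp Γ)
    {k₁ k₂ : ℕ} (L : Fin k₁ → Set V) (U : Fin k₂ → Set V)
    (i : ℕ) (hi : 1 ≤ i) (ℓ : Fin k₂) (Y : Set V)
    (hY : Y = (H.graph i).attr Player.one (U ℓ ∪ H.Z i))
    (D : Set V)
    (hforce : ∀ v ∈ D, Γ.ForcesStayBuchi Player.two D L v)
    (hdis : D ∩ U ℓ = ∅)
    (hsize : (Γ.attr Player.two D).ncard ≤ 2 ^ i) :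
    D ⊆ Yᶜ ∧
    ∀ v : ↥Yᶜ, (v : V) ∈ D →
      ((H.graph i).sub Yᶜ).ForcesStayBuchi Player.two
        {x : ↥Yᶜ | (x : V) ∈ D}
        (fun t : Fin k₁ => {x : ↥Yᶜ | (x : V) ∈ L t \ Y}) v :=
  hier_gr1_dominion_size_general hΓ H hY hforce (Set.disjoint_iff_inter_eq_empty.mpr hdis)
    (Set.toFinite _) hsize
end
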